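/- Let K be a number field and S a finite set of places of K containing all the archimedean ones. Let φ be an endomorphism of ℙ¹ defined over K of degree d ≥ 2 with good reduction outside S, and let P ∈ ℙ¹(K) be a periodic point of φ of period 2. Then |Tail(φ,K,P)| ≤ max{ (2(C(3,|S|)+2)+1)d + 1, (d−1)(1 + B(|S|)(B(|S|) + C(3,|S|) + 3)) }, where B(s) = 2^{16s} and C(3,s) = e^{18^9(3s−2)}. -/

import Mathlib

open NumberField IsDedekindDomain MvPolynomial
open scoped Classical nonZeroDivisors

set_option synthInstance.maxHeartbeats 1000000
set_option maxHeartbeats 1000000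

noncomputable section

/-- The projective line over `K`. -/
abbrev P1 (K : Type*) [Field K] := Projectivization K (Fin 2 → K)

variable {K : Type*} [Field K] [NumberField K]

/-- The additive `v`-adic valuation (order) of `x ∈ K`, with junk value `0` at `x = 0`,
normalized so that it is surjective onto `ℤ`. -/
def ordAt (v : HeightOneSpectrum (𝓞 K)) (x : K) : ℤ :=
  if hx : x = 0 then 0
  else - Multiplicative.toAdd (WithZero.unzero ((v.valuation K).ne_zero_iff.mpr hx))

/-- `min (v(x), v(y))` for a pair of coordinates, not both zero. -/
def minOrd (v : HeightOneSpectrum (𝓞 K)) (x y : K) : ℤ :=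
  if x = 0 then ordAt v y else if y = 0 then ordAt v x else min (ordAt v x) (ordAt v y)

/-- The `v`-adic logarithmic distance between two points of `ℙ¹(K)`:
`δ_v(P,Q) = v(x₁y₂ - x₂y₁) - min(v x₁, v y₁) - min(v x₂, v y₂)`, with value `⊤` when `P = Q`
(it is independent of the choice of homogeneous coordinates, so we compute it on the chosen
representatives). -/
def logDist (v : HeightOneSpectrum (𝓞 K)) (P Q : P1 K) : WithTop ℤ :=
  if P = Q then ⊤
  else ((ordAt v (P.rep 0 * Q.rep 1 - P.rep 1 * Q.rep 0)
        - minOrd v (P.rep 0) (P.rep 1) - minOrd v (Q.rep 0) (Q.rep 1) : ℤ) : WithTop ℤ)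

/-- An endomorphism of `ℙ¹` of degree `d` defined over `K`, given by a pair of homogeneous
forms of degree `d` with no common zero over the algebraic closure, together with the induced
self-map of `ℙ¹(K)`. -/
structure P1Map (K : Type*) [Field K] (d : ℕ) where
  toFun : P1 K → P1 K
  F : MvPolynomial (Fin 2) K
  G : MvPolynomial (Fin 2) K
  homF : F.IsHomogeneous d
  homG : G.IsHomogeneous d
  coprime : ∀ x y : AlgebraicClosure K,
    aeval ![x, y] F = 0 → aeval ![x, y] G = 0 → x = 0 ∧ y = 0
  compat : ∀ (x y : K) (hxy : ![x, y] ≠ 0)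
    (h : ![eval ![x, y] F, eval ![x, y] G] ≠ 0),
    toFun (Projectivization.mk K ![x, y] hxy) =
      Projectivization.mk K ![eval ![x, y] F, eval ![x, y] G] h

variable {d : ℕ}

/-- `φ` has good reduction at the finite place `v`: some representing pair of forms has
coefficients in the valuation ring at `v`, not all in the maximal ideal, and the reductions
of the two forms modulo `v` have no common zero in `ℙ¹` of the algebraic closure of the
residue field. -/
def GoodReductionAt (φ : P1Map K d) (v : HeightOneSpectrum (𝓞 K)) : Prop :=
  ∃ c : K, c ≠ 0 ∧
    ∃ F₀ G₀ : MvPolynomial (Fin 2) (v.valuation (K := K)).valuationSubring,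
      MvPolynomial.map ((v.valuation (K := K)).valuationSubring.subtype) F₀ = C c * φ.F ∧
      MvPolynomial.map ((v.valuation (K := K)).valuationSubring.subtype) G₀ = C c * φ.G ∧
      ((∃ m, F₀.coeff m ∉ IsLocalRing.maximalIdeal (v.valuation (K := K)).valuationSubring) ∨
        (∃ m, G₀.coeff m ∉ IsLocalRing.maximalIdeal (v.valuation (K := K)).valuationSubring)) ∧
      ∀ x y : AlgebraicClosure
          (IsLocalRing.ResidueField (v.valuation (K := K)).valuationSubring),
        eval ![x, y] (MvPolynomial.map
          ((algebraMap (IsLocalRing.ResidueField (v.valuation (K := K)).valuationSubring)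
              (AlgebraicClosure _)).comp
            (IsLocalRing.residue _)) F₀) = 0 →
        eval ![x, y] (MvPolynomial.map
          ((algebraMap (IsLocalRing.ResidueField (v.valuation (K := K)).valuationSubring)
              (AlgebraicClosure _)).comp
            (IsLocalRing.residue _)) G₀) = 0 →
        x = 0 ∧ y = 0

/-- `φ` has good reduction outside `S`, where `S` consists of all archimedean places together
with the finite places in `T`. -/
def GoodReductionOutside (φ : P1Map K d) (T : Finset (HeightOneSpectrum (𝓞 K))) : Prop :=
  ∀ v ∉ T, GoodReductionAt φ v

/-- `P` is a periodic point of `φ`. -/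
def IsPeriodicPoint (φ : P1Map K d) (P : P1 K) : Prop :=
  ∃ n, 0 < n ∧ φ.toFun^[n] P = P

/-- `P` is a preperiodic point of `φ`. -/
def IsPreperiodicPoint (φ : P1Map K d) (P : P1 K) : Prop :=
  ∃ m, IsPeriodicPoint φ (φ.toFun^[m] P)

/-- `P` is a tail point of `φ`: preperiodic but not periodic. -/
def IsTailPoint (φ : P1Map K d) (P : P1 K) : Prop :=
  IsPreperiodicPoint φ P ∧ ¬ IsPeriodicPoint φ P

/-- The set `Tail(φ,K,P)` of `K`-rational tail points of `P`: non-periodic points having `P`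
in their forward orbit. -/
def TailOf (φ : P1Map K d) (P : P1 K) : Set (P1 K) :=
  {Q | ¬ IsPeriodicPoint φ Q ∧ ∃ n, φ.toFun^[n] Q = P}

/-- `P = [a:b]` is a critical point of `φ = [F:G]`: the algebraic condition
`φ([x:y]) = φ([a:b])`, i.e. the form `G(a,b)·F(X,Y) - F(a,b)·G(X,Y)`, vanishes to order
at least `2` at `[a:b]`. -/
def IsCriticalPt (φ : P1Map K d) (P : P1 K) : Prop :=
  ∃ (a b : K) (hab : ![a, b] ≠ 0), P = Projectivization.mk K ![a, b] hab ∧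
    (C b * X 0 - C a * X 1) ^ 2 ∣
      (C (eval ![a, b] φ.G) * φ.F - C (eval ![a, b] φ.F) * φ.G)

/-- `P` belongs to a critical cycle of `φ`: it lies in the orbit of a critical periodic
point. -/
def InCriticalCycle (φ : P1Map K d) (P : P1 K) : Prop :=
  ∃ Q, IsCriticalPt φ Q ∧ IsPeriodicPoint φ Q ∧ ∃ n, φ.toFun^[n] Q = P

/-- The cardinality `|S|` of the set of places `S` consisting of all archimedean places
together with the finite places in `T`. -/
def sCard (K : Type*) [Field K] [NumberField K] (T : Finset (HeightOneSpectrum (𝓞 K))) : ℕ :=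
  T.card + Fintype.card (InfinitePlace K)

/-- `B(s) = 2^{16 s}`. -/
def Bconst (s : ℕ) : ℕ := 2 ^ (16 * s)

/-- `C(n,s) = e^{(6n)^{3n} (n s + 1 - n)}`. -/
def Cconst (n s : ℕ) : ℝ := Real.exp ((6 * n : ℝ) ^ (3 * n) * (n * s + 1 - n))

/-- `CV(d,s) = (3B(s)+13)d + 27B(s) + C(5,s) + 6C(3,s) + 32`. -/
def CVconst (d s : ℕ) : ℝ :=
  (3 * (Bconst s : ℝ) + 13) * d + 27 * (Bconst s : ℝ) + Cconst 5 s + 6 * Cconst 3 s + 32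

/-- `L₁(d,s) = (d-1)(1 + d(1 + B(s)))`. -/
def L1const (d s : ℕ) : ℕ := (d - 1) * (1 + d * (1 + Bconst s))

/-- `L₂(d,s) = max{(2(C(3,s)+2)+1)d + 1, (d-1)(1 + B(s)(B(s) + C(3,s) + 3))}`. -/
def L2const (d s : ℕ) : ℝ :=
  max ((2 * (Cconst 3 s + 2) + 1) * d + 1)
    (((d : ℝ) - 1) * (1 + (Bconst s : ℝ) * ((Bconst s : ℝ) + Cconst 3 s + 3)))

/-- `L₃(d,s) = ((1 + 3B(s))B(s) + 1)(d-1)`. -/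
def L3const (d s : ℕ) : ℕ := ((1 + 3 * Bconst s) * Bconst s + 1) * (d - 1)

/-- `L₄(d,s) = (C(3,s) + 3)(d-1)`. -/
def L4const (d s : ℕ) : ℝ := (Cconst 3 s + 3) * ((d : ℝ) - 1)

end

/-!
Let `P ↦ P' ↦ P` be the cycle. The form whose zeros are the preimages of `P` is the product of the
linear form vanishing at `P'` and a form which, at a place of good reduction, is a unit at `P`; so
no preimage of `P` other than `P'` reduces to the same point as `P`. Iterating, two points of the
tail that enter the cycle at `P`, one after an even and the other after an odd number of steps,
never have the same reduction outside `S`.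

Let `X` and `Y` be the sets of these even and odd tail points, in an affine coordinate. Outside `S`
the absolute value `|a - b|` with `a ∈ X`, `b ∈ Y` factors into a term depending on `a` and one
depending on `b`, so the cross ratio `((a - a') (b - b')) / ((a - b') (a' - b))` has absolute value
at most `1`. If `X` and `Y` are both large, then passing to large parts of `X` and `Y` once for each
place in `S` makes the cross ratio at most `1` at the finite places in `S` and less than `1` at the
archimedean ones, contradicting the product formula. So one of `X` and `Y` is small, and since each
maps into the other up to `P`, with fibres of at most `d` points, both are.
-/

section LargeParts

variable {α β ι : Type*}

/-- The quaternary relation `R` holds on large parts, with loss at most `c`, if any two disjoint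
finite sets `A` and `B` contain subsets `A'` and `B'`, smaller by a factor of at most `c`, such that
`R a a' b b'` for all `a, a' ∈ A'` and `b, b' ∈ B'`. -/
def HoldsOnLargeParts (c : ℕ) (R : α → α → α → α → Prop) : Prop :=
  ∀ A B : Finset α, Disjoint A B → ∃ A' ⊆ A, ∃ B' ⊆ B,
    A.card ≤ c * A'.card ∧ B.card ≤ c * B'.card ∧
      ∀ a ∈ A', ∀ a' ∈ A', ∀ b ∈ B', ∀ b' ∈ B', R a a' b b'

namespace HoldsOnLargeParts

variable {c c₁ c₂ : ℕ} {R R₁ R₂ : α → α → α → α → Prop}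

theorem and (h₁ : HoldsOnLargeParts c₁ R₁) (h₂ : HoldsOnLargeParts c₂ R₂) :
    HoldsOnLargeParts (c₁ * c₂) fun a a' b b' ↦ R₁ a a' b b' ∧ R₂ a a' b b' := by
  intro A B hAB
  obtain ⟨A₁, hA₁, B₁, hB₁, hcA₁, hcB₁, hR₁⟩ := h₁ A B hAB
  obtain ⟨A₂, hA₂, B₂, hB₂, hcA₂, hcB₂, hR₂⟩ := h₂ A₁ B₁ (hAB.mono hA₁ hB₁)
  refine ⟨A₂, hA₂.trans hA₁, B₂, hB₂.trans hB₁, ?_, ?_, fun a ha a' ha' b hb b' hb' ↦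
    ⟨hR₁ a (hA₂ ha) a' (hA₂ ha') b (hB₂ hb) b' (hB₂ hb'), hR₂ a ha a' ha' b hb b' hb'⟩⟩
  · rw [mul_assoc]
    exact hcA₁.trans (Nat.mul_le_mul_left c₁ hcA₂)
  · rw [mul_assoc]
    exact hcB₁.trans (Nat.mul_le_mul_left c₁ hcB₂)

theorem forall_mem {R : ι → α → α → α → α → Prop} (h : ∀ i, HoldsOnLargeParts c (R i))
    (I : Finset ι) :
    HoldsOnLargeParts (c ^ I.card) fun a a' b b' ↦ ∀ i ∈ I, R i a a' b b' := by
  induction I using Finset.induction_on with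
  | empty => exact fun A B _ ↦ ⟨A, subset_rfl, B, subset_rfl, by simp⟩
  | insert i I hi ih => simpa [Finset.card_insert_of_notMem hi, pow_succ'] using (h i).and ih

theorem comap {R : β → β → β → β → Prop} (h : HoldsOnLargeParts c R) (g : α ↪ β) :
    HoldsOnLargeParts c fun a a' b b' ↦ R (g a) (g a') (g b) (g b') := by
  intro A B hAB
  obtain ⟨A', hA', B', hB', hcA, hcB, hR⟩ := h (A.map g) (B.map g) (by simpa using hAB)
  obtain ⟨A', hA'A, rfl⟩ := Finset.subset_map_iff.mp hA'
  obtain ⟨B', hB'B, rfl⟩ := Finset.subset_map_iff.mp hB'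
  exact ⟨A', hA'A, B', hB'B, by simpa using hcA, by simpa using hcB, by simpa using hR⟩

theorem exists_ne (h : HoldsOnLargeParts c R) {A B : Finset α} (hAB : Disjoint A B)
    (hA : c < A.card) (hB : c < B.card) :
    ∃ a ∈ A, ∃ a' ∈ A, ∃ b ∈ B, ∃ b' ∈ B, a ≠ a' ∧ b ≠ b' ∧ R a a' b b' := by
  obtain ⟨A', hA', B', hB', hcA, hcB, hR⟩ := h A B hAB
  obtain ⟨a, ha, a', ha', haa⟩ := Finset.one_lt_card.mp
    (lt_of_mul_lt_mul_left' (by simpa using hA.trans_le hcA) : 1 < A'.card)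
  obtain ⟨b, hb, b', hb', hbb⟩ := Finset.one_lt_card.mp
    (lt_of_mul_lt_mul_left' (by simpa using hB.trans_le hcB) : 1 < B'.card)
  exact ⟨a, hA' ha, a', hA' ha', b, hB' hb, b', hB' hb', haa, hbb, hR a ha a' ha' b hb b' hb'⟩

end HoldsOnLargeParts

end LargeParts

section Ultrametric

variable {α : Type*} [MetricSpace α]

/-- `G` is isolated in `X` if no point of `X` outside `G` distinguishes two points of `G` by its
distances to them. Balls are the basic example in an ultrametric space. -/
def IsIsolatedIn (G X : Finset α) : Prop :=
  ∀ x ∈ G, ∀ x' ∈ G, ∀ y ∈ X, y ∉ G → dist x y = dist x' y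

theorem exists_minimal_isIsolatedIn (A B : Finset α) :
    ∃ G, IsIsolatedIn G (A ∪ B) ∧
      (A.card ≤ 3 * (A ∩ G).card ∨ B.card ≤ 3 * (B ∩ G).card) ∧
      ∀ H ⊂ G, IsIsolatedIn H (A ∪ B) →
        3 * (A ∩ H).card < A.card ∧ 3 * (B ∩ H).card < B.card := by
  let P : Finset α → Prop := fun G ↦
    IsIsolatedIn G (A ∪ B) ∧ (A.card ≤ 3 * (A ∩ G).card ∨ B.card ≤ 3 * (B ∩ G).card)
  have hP : P (A ∪ B) :=
    ⟨fun x _ x' _ y hy hy' ↦ absurd hy hy',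
      Or.inl (by rw [Finset.inter_eq_left.mpr Finset.subset_union_left]; lia)⟩
  obtain ⟨G, -, hG⟩ := exists_minimal_le_of_wellFoundedLT P (A ∪ B) hP
  refine ⟨G, hG.prop.1, hG.prop.2, fun H hHG hH ↦ ?_⟩
  simpa [P, hH] using hG.not_prop_of_lt hHG

variable [IsUltrametricDist α] {A B G X : Finset α}

-- The smaller part is an open ball whose radius is the diameter of `G`.
theorem IsIsolatedIn.exists_split (hG : IsIsolatedIn G X) (hnt : G.Nontrivial) :
    ∃ H ⊂ G, H.Nonempty ∧ IsIsolatedIn H X ∧ IsIsolatedIn (G \ H) X := by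
  obtain ⟨⟨p, q⟩, hpq, hmax⟩ :=
    (G ×ˢ G).exists_max_image (fun z ↦ dist z.1 z.2) (hnt.nonempty.product hnt.nonempty)
  obtain ⟨hp, hq⟩ := Finset.mem_product.mp hpq
  have hle : ∀ x ∈ G, ∀ y ∈ G, dist x y ≤ dist p q :=
    fun x hx y hy ↦ hmax (x, y) (Finset.mk_mem_product hx hy)
  have hpos : 0 < dist p q := by
    obtain ⟨x, hx, y, hy, hxy⟩ := hnt
    exact (dist_pos.mpr hxy).trans_le (hle x hx y hy)
  have hfar : ∀ x, dist x p < dist p q → ∀ y ∈ G, ¬ dist y p < dist p q →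
      dist x y = dist p q := by
    intro x hx y hy hyp
    have hyp' : dist p y = dist p q := le_antisymm (hle p hp y hy) (by simpa [dist_comm] using hyp)
    rw [IsUltrametricDist.dist_eq_max_of_dist_ne_dist x p y (by rw [hyp']; exact hx.ne), hyp',
      max_eq_right hx.le]
  refine ⟨G.filter (dist · p < dist p q), ?_, ⟨p, by simp [hp, hpos]⟩, ?_, ?_⟩
  · exact Finset.filter_ssubset.mpr ⟨q, hq, by simp [dist_comm]⟩
  · intro x hx x' hx' y hyX hy
    simp only [Finset.mem_filter, not_and] at hx hx' hy
    by_cases hyG : y ∈ G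
    · rw [hfar x hx.2 y hyG (hy hyG), hfar x' hx'.2 y hyG (hy hyG)]
    · exact hG x hx.1 x' hx'.1 y hyX hyG
  · intro x hx x' hx' y hyX hy
    simp only [Finset.mem_sdiff, Finset.mem_filter, not_and] at hx hx' hy
    by_cases hyG : y ∈ G
    · have hyp : dist y p < dist p q := by simpa [hyG] using hy
      rw [dist_comm x, dist_comm x', hfar y hyp x hx.1 (hx.2 hx.1),
        hfar y hyp x' hx'.1 (hx'.2 hx'.1)]
    · exact hG x hx.1 x' hx'.1 y hyX hyG

theorem IsIsolatedIn.card_le_card_sdiff (hG : IsIsolatedIn G X) (hAB : Disjoint A B)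
    (hAG : (A ∩ G).Nonempty)
    (hmin : ∀ H ⊂ G, IsIsolatedIn H X → 3 * (B ∩ H).card < B.card) :
    B.card ≤ 3 * (B \ G).card := by
  have hsum := Finset.card_inter_add_card_sdiff B G
  rcases (G : Set α).subsingleton_or_nontrivial with hsub | hnt
  · obtain ⟨a, ha⟩ := hAG
    obtain ⟨haA, haG⟩ := Finset.mem_inter.mp ha
    have hBG : B ∩ G = ∅ := Finset.eq_empty_of_forall_notMem fun b hb ↦
      Finset.disjoint_left.mp hAB haA
        (hsub haG (Finset.mem_inter.mp hb).2 ▸ (Finset.mem_inter.mp hb).1)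
    rw [hBG, Finset.card_empty] at hsum
    lia
  · obtain ⟨H, hHG, hH, hHX, hHX'⟩ := hG.exists_split hnt
    have hsplit : (B ∩ G).card = (B ∩ H).card + (B ∩ (G \ H)).card := by
      rw [← Finset.card_union_of_disjoint, ← Finset.inter_union_distrib_left,
        Finset.union_sdiff_of_subset hHG.subset]
      exact Finset.disjoint_sdiff.mono Finset.inter_subset_right Finset.inter_subset_right
    have h₁ := hmin H hHG hHX
    have h₂ := hmin (G \ H) (Finset.sdiff_ssubset hHG.subset hH) hHX'
    lia

theorem IsIsolatedIn.dist_mul_dist_le (hG : IsIsolatedIn G X) {a a' b b' : α} (ha : a ∈ G)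
    (ha' : a' ∈ G) (hb : b ∈ X \ G) (hb' : b' ∈ X \ G) :
    dist a a' * dist b b' ≤ dist a b' * dist a' b := by
  rw [Finset.mem_sdiff] at hb hb'
  have h : dist a b = dist a' b := hG a ha a' ha' b hb.1 hb.2
  have h' : dist a b' = dist a' b' := hG a ha a' ha' b' hb'.1 hb'.2
  have haa : dist a a' ≤ min (dist a b) (dist a b') := by
    refine le_min ?_ ?_
    · simpa [dist_comm b, h] using dist_triangle_max a b a'
    · simpa [dist_comm b', h'] using dist_triangle_max a b' a'
  have hbb : dist b b' ≤ max (dist a b) (dist a b') := by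
    simpa [dist_comm b a] using dist_triangle_max b a b'
  calc dist a a' * dist b b'
      ≤ min (dist a b) (dist a b') * max (dist a b) (dist a b') := by gcongr
    _ = dist a b' * dist a' b := by rw [min_mul_max, h, mul_comm]

theorem holdsOnLargeParts_dist_mul_dist_le :
    HoldsOnLargeParts 3 fun a a' b b' : α ↦ dist a a' * dist b b' ≤ dist a b' * dist a' b := by
  intro A B hAB
  rcases A.eq_empty_or_nonempty with rfl | hA
  · exact ⟨∅, subset_rfl, B, subset_rfl, by simp, by lia, by simp⟩
  rcases B.eq_empty_or_nonempty with rfl | hB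
  · exact ⟨A, subset_rfl, ∅, subset_rfl, by lia, by simp, by simp⟩
  obtain ⟨G, hG, hAG | hBG, hmin⟩ := exists_minimal_isIsolatedIn A B
  · have hne : (A ∩ G).Nonempty := by
      rw [← Finset.card_pos] at hA ⊢
      lia
    refine ⟨A ∩ G, Finset.inter_subset_left, B \ G, Finset.sdiff_subset, hAG,
      hG.card_le_card_sdiff hAB hne fun H hHG hH ↦ (hmin H hHG hH).2, ?_⟩
    exact fun a ha a' ha' b hb b' hb' ↦ hG.dist_mul_dist_le (by simp_all) (by simp_all)
      (by simp_all) (by simp_all)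
  · have hne : (B ∩ G).Nonempty := by
      rw [← Finset.card_pos] at hB ⊢
      lia
    refine ⟨A \ G, Finset.sdiff_subset, B ∩ G, Finset.inter_subset_left,
      hG.card_le_card_sdiff hAB.symm hne fun H hHG hH ↦ (hmin H hHG hH).1, hBG, ?_⟩
    intro a ha a' ha' b hb b' hb'
    have := hG.dist_mul_dist_le (a := b) (a' := b') (b := a) (b' := a') (by simp_all)
      (by simp_all) (by simp_all) (by simp_all)
    simpa only [dist_comm, mul_comm] using this

end Ultrametric

section Archimedean

open Module Metric

variable {E : Type*} [NormedAddCommGroup E] [NormedSpace ℝ E]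

/-- The loss at an archimedean place in the comparison of products of distances in `E`: by the
Besicovitch covering bound, a ball of radius `4 r` is covered by `archLoss E - 1` sets of diameter
less than `r`. -/
noncomputable def archLoss (E : Type*) [NormedAddCommGroup E] [NormedSpace ℝ E] : ℕ :=
  (5 ^ finrank ℝ E) ^ 4 + 1

theorem le_archLoss_mul (n : ℕ) : n ≤ archLoss E * n :=
  Nat.le_mul_of_pos_left n (Nat.succ_pos _)

/-- `G` is a part of `A` of proportion at least `1 / archLoss E` and least possible diameter. -/
structure IsTightestPart (G A : Finset E) : Prop where
  subset : G ⊆ A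
  card_le : A.card ≤ archLoss E * G.card
  diam_le : ∀ H ⊆ A, A.card ≤ archLoss E * H.card → diam (G : Set E) ≤ diam (H : Set E)

theorem exists_isTightestPart (A : Finset E) : ∃ G, IsTightestPart G A := by
  obtain ⟨G, hG, hmin⟩ := (A.powerset.filter fun G ↦
    A.card ≤ archLoss E * G.card).exists_min_image (fun G ↦ diam (G : Set E))
    ⟨A, by simpa using le_archLoss_mul A.card⟩
  simp only [Finset.mem_filter, Finset.mem_powerset] at hG hmin
  exact ⟨G, hG.1, hG.2, fun H hHA hH ↦ hmin H ⟨hHA, hH⟩⟩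

variable [FiniteDimensional ℝ E]

theorem card_le_five_pow_finrank_of_separated {U : Finset E} {x : E} {R : ℝ} (hR : 0 < R)
    (hU : ∀ u ∈ U, dist u x ≤ R) (hsep : ∀ u ∈ U, ∀ w ∈ U, u ≠ w → R / 2 ≤ dist u w) :
    U.card ≤ 5 ^ finrank ℝ E := by
  let g : E → E := fun u ↦ (2 / R) • (u - x)
  have hnorm : ∀ u w, ‖g u - g w‖ = 2 / R * dist u w := fun u w ↦ by
    rw [← smul_sub, sub_sub_sub_cancel_right, norm_smul, Real.norm_of_nonneg (by positivity),
      dist_eq_norm]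
  have hinj : Function.Injective g := fun u w huw ↦ by
    simpa [huw, hR.ne'] using (hnorm u w).symm
  rw [← Finset.card_image_of_injective U hinj]
  refine Besicovitch.card_le_of_separated _ ?_ ?_
  · simp only [Finset.forall_mem_image]
    intro u hu
    have := hnorm u x
    simp only [g, sub_self, smul_zero, sub_zero] at this ⊢
    rw [this, div_mul_eq_mul_div, div_le_iff₀ hR]
    linarith [hU u hu]
  · simp only [Finset.forall_mem_image]
    intro u hu w hw huw
    rw [hnorm, div_mul_eq_mul_div, le_div_iff₀ hR]
    linarith [hsep u hu w hw (ne_of_apply_ne g huw)]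

theorem exists_card_le_card_filter_half_ball {S : Finset E} {x : E} {R : ℝ} (hR : 0 < R)
    (hS : ∀ s ∈ S, dist s x ≤ R) :
    ∃ y, S.card ≤ 5 ^ finrank ℝ E * (S.filter (dist · y ≤ R / 2)).card := by
  rcases S.eq_empty_or_nonempty with rfl | hne
  · exact ⟨x, by simp⟩
  obtain ⟨y, -, hmax⟩ := S.exists_max_image (fun y ↦ (S.filter (dist · y ≤ R / 2)).card) hne
  obtain ⟨U, hU⟩ := (S.powerset.filter fun U ↦
    ∀ u ∈ U, ∀ w ∈ U, u ≠ w → R / 2 ≤ dist u w).exists_maximal ⟨∅, by simp⟩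
  obtain ⟨hUS, hsep⟩ : U ⊆ S ∧ ∀ u ∈ U, ∀ w ∈ U, u ≠ w → R / 2 ≤ dist u w := by
    simpa using hU.prop
  have hcover : S ⊆ U.biUnion fun u ↦ S.filter (dist · u ≤ R / 2) := by
    intro s hs
    by_contra hcon
    have hfar : ∀ u ∈ U, R / 2 < dist s u := by simpa [hs] using hcon
    have hsU : s ∉ U := fun h ↦ by
      have := hfar s h
      rw [dist_self] at this
      linarith
    refine hU.not_prop_of_gt (Finset.ssubset_insert hsU) ?_
    have hfar' : ∀ u ∈ U, R / 2 ≤ dist s u := fun u hu ↦ (hfar u hu).le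
    have hfar'' : ∀ u ∈ U, R / 2 ≤ dist u s := fun u hu ↦ dist_comm s u ▸ hfar' u hu
    simp_all [Finset.insert_subset_iff]
  refine ⟨y, (Finset.card_le_card hcover).trans ((Finset.card_biUnion_le_card_mul _ _ _ fun u hu ↦
    hmax u (hUS hu)).trans (Nat.mul_le_mul_right _ ?_))⟩
  exact card_le_five_pow_finrank_of_separated hR (fun u hu ↦ hS u (hUS hu)) hsep

theorem exists_card_le_card_subset_ball {S : Finset E} {x : E} {R : ℝ} (hR : 0 < R)
    (hS : ∀ s ∈ S, dist s x ≤ R) (n : ℕ) :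
    ∃ V ⊆ S, ∃ y, S.card ≤ (5 ^ finrank ℝ E) ^ n * V.card ∧ ∀ v ∈ V, dist v y ≤ R / 2 ^ n := by
  induction n with
  | zero => exact ⟨S, subset_rfl, x, by simp, by simpa using hS⟩
  | succ n ih =>
    obtain ⟨V, hVS, y, hcard, hV⟩ := ih
    obtain ⟨z, hz⟩ := exists_card_le_card_filter_half_ball (by positivity) hV
    refine ⟨V.filter (dist · z ≤ R / 2 ^ n / 2), (Finset.filter_subset _ V).trans hVS, z, ?_,
      fun v hv ↦ ?_⟩
    · rw [pow_succ, mul_assoc]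
      exact hcard.trans (Nat.mul_le_mul_left _ hz)
    · rw [pow_succ, ← div_div]
      exact (Finset.mem_filter.mp hv).2

theorem card_le_card_filter_far {B : Finset E} {x : E} (hx : x ∉ B) {r : ℝ} (hr : 0 ≤ r)
    (hmin : ∀ H ⊆ B, B.card ≤ archLoss E * H.card → r ≤ diam (H : Set E)) :
    B.card ≤ archLoss E * (B.filter (4 * r < dist · x)).card := by
  have hsum := B.card_filter_add_card_filter_not (4 * r < dist · x)
  set near := B.filter (¬ 4 * r < dist · x)
  rcases hr.eq_or_lt with rfl | hr
  · have : near = ∅ := Finset.filter_eq_empty_iff.mpr fun b hb ↦ by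
      simpa using fun h : b = x ↦ hx (h ▸ hb)
    rw [this, Finset.card_empty, add_zero] at hsum
    rw [← hsum]
    exact le_archLoss_mul _
  obtain ⟨V, hV, y, hcard, hVy⟩ := exists_card_le_card_subset_ball (S := near) (x := x)
    (R := 4 * r) (by positivity) (fun b hb ↦ not_lt.mp (Finset.mem_filter.mp hb).2) 4
  have hdiam : diam (V : Set E) ≤ r / 2 := by
    refine diam_le_of_forall_dist_le (by positivity) fun v hv w hw ↦ ?_
    linarith [dist_triangle_right v w y, hVy v hv, hVy w hw]
  have hVB : archLoss E * V.card < B.card := by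
    by_contra! h
    linarith [hmin V (hV.trans (Finset.filter_subset _ _)) h]
  have hnear_le : archLoss E * near.card ≤ (5 ^ finrank ℝ E) ^ 4 * B.card :=
    calc archLoss E * near.card
        ≤ archLoss E * ((5 ^ finrank ℝ E) ^ 4 * V.card) := Nat.mul_le_mul_left _ hcard
      _ = (5 ^ finrank ℝ E) ^ 4 * (archLoss E * V.card) := Nat.mul_left_comm _ _ _
      _ ≤ (5 ^ finrank ℝ E) ^ 4 * B.card := Nat.mul_le_mul_left _ hVB.le
  unfold archLoss at hnear_le ⊢
  linear_combination hnear_le + ((5 ^ finrank ℝ E) ^ 4 + 1) * hsum.symm.le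

theorem dist_mul_dist_lt_of_far {α : Type*} [PseudoMetricSpace α] {a a' b b' x : α} {r : ℝ}
    (haa : dist a a' ≤ r) (hax : dist a x ≤ r) (hax' : dist a' x ≤ r)
    (hb : 4 * r < dist b x) (hb' : 4 * r < dist b' x) :
    dist a a' * dist b b' < dist a b' * dist a' b := by
  have hr : 0 ≤ r := dist_nonneg.trans haa
  have hbb := dist_triangle_right b b' x
  have hab : dist b' x - r ≤ dist a b' := by linarith [dist_triangle_left b' x a]
  have hab' : dist b x - r ≤ dist a' b := by linarith [dist_triangle_left b x a']
  calc dist a a' * dist b b' ≤ r * (dist b x + dist b' x) := by gcongr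
    _ < (dist b' x - r) * (dist b x - r) := by
      nlinarith [mul_pos (sub_pos.mpr hb) (sub_pos.mpr hb')]
    _ ≤ dist a b' * dist a' b := by gcongr; linarith

theorem exists_large_parts_of_diam_le {A B G : Finset E} (hAB : Disjoint A B)
    (hG : IsTightestPart G A)
    (hmin : ∀ H ⊆ B, B.card ≤ archLoss E * H.card → diam (G : Set E) ≤ diam (H : Set E)) :
    ∃ A' ⊆ A, ∃ B' ⊆ B, A.card ≤ archLoss E * A'.card ∧ B.card ≤ archLoss E * B'.card ∧
      ∀ a ∈ A', ∀ a' ∈ A', ∀ b ∈ B', ∀ b' ∈ B',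
        dist a a' * dist b b' < dist a b' * dist a' b := by
  refine ⟨G, hG.subset, ?_⟩
  rcases G.eq_empty_or_nonempty with rfl | ⟨x, hx⟩
  · exact ⟨B, subset_rfl, hG.card_le, le_archLoss_mul _, by simp⟩
  refine ⟨_, Finset.filter_subset _ B, hG.card_le,
    card_le_card_filter_far (Finset.disjoint_left.mp hAB (hG.subset hx)) diam_nonneg hmin, ?_⟩
  have hdiam : ∀ a ∈ G, ∀ a' ∈ G, dist a a' ≤ diam (G : Set E) := fun a ha a' ha' ↦
    dist_le_diam_of_mem G.finite_toSet.isBounded ha ha'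
  exact fun a ha a' ha' b hb b' hb' ↦ dist_mul_dist_lt_of_far (hdiam a ha a' ha') (hdiam a ha x hx)
    (hdiam a' ha' x hx) (Finset.mem_filter.mp hb).2 (Finset.mem_filter.mp hb').2

theorem holdsOnLargeParts_dist_mul_dist_lt :
    HoldsOnLargeParts (archLoss E)
      fun a a' b b' : E ↦ dist a a' * dist b b' < dist a b' * dist a' b := by
  intro A B hAB
  obtain ⟨G, hG⟩ := exists_isTightestPart A
  obtain ⟨H, hH⟩ := exists_isTightestPart B
  rcases le_total (diam (G : Set E)) (diam (H : Set E)) with hGH | hHG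
  · exact exists_large_parts_of_diam_le hAB hG fun U hUB hU ↦ hGH.trans (hH.diam_le U hUB hU)
  · obtain ⟨B', hB', A', hA', hcB, hcA, hR⟩ := exists_large_parts_of_diam_le hAB.symm hH
      fun U hUA hU ↦ hHG.trans (hG.diam_le U hUA hU)
    refine ⟨A', hA', B', hB', hcA, hcB, fun a ha a' ha' b hb b' hb' ↦ ?_⟩
    simpa only [dist_comm, mul_comm] using hR b hb b' hb' a ha a' ha'

end Archimedean

section NumberField

variable {K : Type*} [Field K] [NumberField K]

theorem exists_infinitePlace_one_le {x : K} (hx : x ≠ 0) (h : ∀ w : FinitePlace K, w x ≤ 1) :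
    ∃ w : InfinitePlace K, 1 ≤ w x := by
  by_contra! hlt
  obtain ⟨-, hfin₁⟩ : 0 ≤ ∏ᶠ w : FinitePlace K, w x ∧ ∏ᶠ w : FinitePlace K, w x ≤ 1 :=
    finprod_induction (fun y : ℝ ↦ 0 ≤ y ∧ y ≤ 1) ⟨zero_le_one, le_rfl⟩
      (fun y z hy hz ↦ ⟨mul_nonneg hy.1 hz.1, mul_le_one₀ hy.2 hz.1 hz.2⟩)
      fun w ↦ ⟨apply_nonneg w x, h w⟩
  have hinf : ∏ w : InfinitePlace K, w x ^ w.mult < 1 := by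
    refine (Finset.prod_lt_prod_of_nonempty (g := fun _ ↦ 1) (fun w _ ↦ ?_) (fun w _ ↦ ?_)
      Finset.univ_nonempty).trans_eq Finset.prod_const_one
    · exact pow_pos (InfinitePlace.pos_iff.mpr hx) _
    · exact pow_lt_one₀ (apply_nonneg w x) (hlt w) InfinitePlace.mult_ne_zero
  have hprod := prod_abs_eq_one hx
  exact absurd hprod (mul_lt_one_of_nonneg_of_lt_one_left
    (Finset.prod_nonneg fun w _ ↦ pow_nonneg (apply_nonneg w x) _) hinf hfin₁).ne

theorem holdsOnLargeParts_finitePlace (v : HeightOneSpectrum (𝓞 K)) :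
    HoldsOnLargeParts 3 fun a a' b b' : K ↦
      FinitePlace.mk v ((a - a') * (b - b')) ≤ FinitePlace.mk v ((a - b') * (a' - b)) := by
  have h := (holdsOnLargeParts_dist_mul_dist_le (α := v.adicCompletion K)).comap
    ⟨FinitePlace.embedding v, RingHom.injective _⟩
  simpa only [Function.Embedding.coeFn_mk, dist_eq_norm, ← map_sub, ← norm_mul, ← map_mul,
    ← FinitePlace.mk_apply] using h

theorem holdsOnLargeParts_infinitePlace (w : InfinitePlace K) :
    HoldsOnLargeParts (archLoss ℂ) fun a a' b b' : K ↦
      w ((a - a') * (b - b')) < w ((a - b') * (a' - b)) := by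
  have h := (holdsOnLargeParts_dist_mul_dist_lt (E := ℂ)).comap
    ⟨w.embedding, RingHom.injective _⟩
  simpa only [Function.Embedding.coeFn_mk, dist_eq_norm, ← map_sub, ← norm_mul, ← map_mul,
    InfinitePlace.norm_embedding_eq] using h

/-- The total loss at the infinite places and at the finite places in `T` in the comparison of
products of differences in `K`. -/
noncomputable def placesLoss (T : Finset (HeightOneSpectrum (𝓞 K))) : ℕ :=
  3 ^ T.card * archLoss ℂ ^ Fintype.card (InfinitePlace K)

variable {T : Finset (HeightOneSpectrum (𝓞 K))}

theorem card_le_or_card_le_of_finitePlace_eq {A B : Finset K} (hAB : Disjoint A B)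
    (h : ∀ v ∉ T, ∀ a ∈ A, ∀ a' ∈ A, ∀ b ∈ B, ∀ b' ∈ B,
      FinitePlace.mk v ((a - b) * (a' - b')) = FinitePlace.mk v ((a - b') * (a' - b))) :
    A.card ≤ placesLoss T ∨ B.card ≤ placesLoss T := by
  by_contra! hcon
  obtain ⟨a, ha, a', ha', b, hb, b', hb', haa, hbb, hT, hinf⟩ :=
    ((HoldsOnLargeParts.forall_mem holdsOnLargeParts_finitePlace T).and
      (HoldsOnLargeParts.forall_mem holdsOnLargeParts_infinitePlace
        (Finset.univ : Finset (InfinitePlace K)))).exists_ne hAB hcon.1 hcon.2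
  set n := (a - a') * (b - b')
  set e := (a - b') * (a' - b)
  have hn₀ : n ≠ 0 := mul_ne_zero (sub_ne_zero.mpr haa) (sub_ne_zero.mpr hbb)
  have hne : ∀ x ∈ A, ∀ y ∈ B, x - y ≠ 0 := fun x hx y hy ↦
    sub_ne_zero.mpr (Finset.disjoint_iff_ne.mp hAB x hx y hy)
  have he₀ : e ≠ 0 := mul_ne_zero (hne a ha b' hb') (hne a' ha' b hb)
  have hfin : ∀ w : FinitePlace K, w (n / e) ≤ 1 := fun w ↦ by
    rw [map_div₀, div_le_one (FinitePlace.pos_iff.mpr he₀), ← FinitePlace.mk_maximalIdeal w]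
    by_cases hw : w.maximalIdeal ∈ T
    · exact hT _ hw
    · calc FinitePlace.mk w.maximalIdeal n
          = FinitePlace.mk w.maximalIdeal ((a - b) * (a' - b') + -e) := by congr 1; ring
        _ ≤ max _ (FinitePlace.mk w.maximalIdeal (-e)) := FinitePlace.add_le _ _ _
        _ = FinitePlace.mk w.maximalIdeal e := by
          rw [map_neg_eq_map, h _ hw a ha a' ha' b hb b' hb', max_self]
  obtain ⟨w, hw⟩ := exists_infinitePlace_one_le (div_ne_zero hn₀ he₀) hfin
  rw [map_div₀, one_le_div (InfinitePlace.pos_iff.mpr he₀)] at hw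
  exact hw.not_gt (hinf w (Finset.mem_univ w))

end NumberField

section BinaryForms

variable {R S : Type*} [CommRing R] [CommRing S]

/-- The determinant of two vectors in the plane; for coordinate vectors of points of the projective
line it measures how far apart the points are. -/
def planarDet (x y : Fin 2 → R) : R := x 0 * y 1 - x 1 * y 0

theorem map_planarDet (ρ : R →+* S) (x y : Fin 2 → R) :
    ρ (planarDet x y) = planarDet (ρ ∘ x) (ρ ∘ y) := by
  simp only [planarDet, map_sub, map_mul, Function.comp_apply]

theorem planarDet_eq_zero_iff_exists_unit_smul {x y : Fin 2 → R} (hx : IsCoprime (x 0) (x 1))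
    (hy : IsCoprime (y 0) (y 1)) : planarDet x y = 0 ↔ ∃ u : Rˣ, u • y = x := by
  refine ⟨fun h ↦ ?_, ?_⟩
  · obtain ⟨a, b, hab⟩ := hy
    obtain ⟨c, e, hce⟩ := hx
    rw [planarDet] at h
    have h₀ : (a * x 0 + b * x 1) * y 0 = x 0 := by linear_combination x 0 * hab - b * h
    have h₁ : (a * x 0 + b * x 1) * y 1 = x 1 := by linear_combination x 1 * hab + a * h
    have hu : (a * x 0 + b * x 1) * (c * y 0 + e * y 1) = 1 := by
      linear_combination hce + c * h₀ + e * h₁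
    refine ⟨Units.mkOfMulEqOne _ _ hu, funext (Fin.forall_fin_two.mpr ⟨h₀, h₁⟩)⟩
  · rintro ⟨u, rfl⟩
    simp only [planarDet, Pi.smul_apply, Units.smul_def, smul_eq_mul]
    ring

theorem eval_map_comp {σ : Type*} (ρ : R →+* S) (x : σ → R) (H : MvPolynomial σ R) :
    eval (ρ ∘ x) (map ρ H) = ρ (eval x H) := by
  rw [eval_map, eval, coe_eval₂Hom, hom_eval₂, RingHom.comp_id]
  rfl

theorem eval₂_mul_of_isHomogeneous {σ : Type*} {H : MvPolynomial σ R} {d : ℕ}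
    (hH : H.IsHomogeneous d) (ρ : R →+* S) (t : S) (g : σ → S) :
    eval₂ ρ (fun i ↦ t * g i) H = t ^ d * eval₂ ρ g H := by
  rw [eval₂_eq, eval₂_eq, Finset.mul_sum]
  refine Finset.sum_congr rfl fun m hm ↦ ?_
  have hd : ∑ i ∈ m.support, m i = d := (hH.degree_eq_sum_deg_support hm).symm
  simp only [mul_pow, Finset.prod_mul_distrib, Finset.prod_pow_eq_pow_sum, hd]
  ring

theorem exists_isHomogeneous_eq_mul_of_dvd {σ : Type*} {p h : MvPolynomial σ R} {m n : ℕ}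
    (hp : p.IsHomogeneous m) (hh : h.IsHomogeneous (m + n)) (hdvd : p ∣ h) :
    ∃ q : MvPolynomial σ R, q.IsHomogeneous n ∧ h = p * q := by
  obtain ⟨q, rfl⟩ := hdvd
  refine ⟨homogeneousComponent n q, homogeneousComponent_isHomogeneous n q, ?_⟩
  let _ : GradedAlgebra (homogeneousSubmodule σ R) := gradedAlgebra
  calc p * q = homogeneousComponent (m + n) (p * q) := (homogeneousComponent_eq_self hh).symm
    _ = p * homogeneousComponent n q := by
      rw [← decomposition.decompose'_apply, ← decomposition.decompose'_apply]
      exact DirectSum.coe_decompose_mul_add_of_left_mem (homogeneousSubmodule σ R) hp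

/-- The linear form vanishing at the point of the projective line with coordinates `p`. -/
noncomputable def lineForm (p : Fin 2 → R) : MvPolynomial (Fin 2) R := C (p 1) * X 0 - C (p 0) * X 1

theorem isHomogeneous_lineForm (p : Fin 2 → R) : (lineForm p).IsHomogeneous 1 :=
  (isHomogeneous_C_mul_X _ _).sub (isHomogeneous_C_mul_X _ _)

theorem eval_lineForm (p x : Fin 2 → R) : eval x (lineForm p) = planarDet x p := by
  simp only [lineForm, planarDet, map_sub, map_mul, eval_C, eval_X]
  ring

theorem lineForm_dvd {H : MvPolynomial (Fin 2) R} {d : ℕ} (hH : H.IsHomogeneous d) {p : Fin 2 → R}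
    (hp : IsCoprime (p 0) (p 1)) (hpH : eval p H = 0) : lineForm p ∣ H := by
  obtain ⟨a, b, hab⟩ := hp
  let π := Ideal.Quotient.mk (Ideal.span {lineForm p})
  let ρ : R →+* MvPolynomial (Fin 2) R ⧸ Ideal.span {lineForm p} := π.comp C
  have hline : ρ (p 1) * π (X 0) - ρ (p 0) * π (X 1) = 0 :=
    Ideal.Quotient.eq_zero_iff_mem.mpr (Ideal.mem_span_singleton_self (lineForm p))
  have hab' : ρ a * ρ (p 0) + ρ b * ρ (p 1) = 1 := by
    rw [← map_mul, ← map_mul, ← map_add, hab, map_one]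
  have hX : π ∘ X = fun i ↦ (ρ a * π (X 0) + ρ b * π (X 1)) * ρ (p i) := by
    refine funext (Fin.forall_fin_two.mpr ⟨?_, ?_⟩) <;> simp only [Function.comp_apply]
    · linear_combination (-π (X 0)) * hab' + ρ b * hline
    · linear_combination (-π (X 1)) * hab' - ρ a * hline
  rw [← Ideal.mem_span_singleton, ← Ideal.Quotient.eq_zero_iff_mem]
  calc π H = eval₂ ρ (π ∘ X) H := (congrArg π (eval₂_eta H)).symm.trans (hom_eval₂ H C π X)
    _ = _ ^ d * eval₂ ρ (ρ ∘ p) H := by rw [hX]; exact eval₂_mul_of_isHomogeneous hH ρ _ _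
    _ = 0 := by rw [← eval_map, eval_map_comp, hpH, map_zero, mul_zero]

end BinaryForms

theorem exists_eq_smul_isCoprime {A : Type*} [CommRing A] [IsDomain A] [IsBezout A]
    (n : Fin 2 → A) : ∃ (g : A) (x : Fin 2 → A), IsCoprime (x 0) (x 1) ∧ n = g • x := by
  let := IsBezout.toGCDDomain A
  obtain ⟨x₀, x₁, h₀, h₁, hu⟩ := extract_gcd (n 0) (n 1)
  exact ⟨gcd (n 0) (n 1), ![x₀, x₁], (gcd_isUnit_iff x₀ x₁).mp hu,
    funext (Fin.forall_fin_two.mpr ⟨h₀, h₁⟩)⟩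

section ProjectiveLine

variable {A : Type*} [CommRing A] {K : Type*} [Field K] [Algebra A K]

variable (K) in
/-- The point of the projective line over `K` with coprime homogeneous coordinates `x` in `A`. -/
noncomputable def toP1 (x : Fin 2 → A) (hx : IsCoprime (x 0) (x 1)) : P1 K :=
  Projectivization.mk K (algebraMap A K ∘ x) (hx.map (algebraMap A K)).ne_zero

theorem toP1_eq_toP1_iff {x y : Fin 2 → A} (hx : IsCoprime (x 0) (x 1))
    (hy : IsCoprime (y 0) (y 1)) :
    toP1 K x hx = toP1 K y hy ↔ algebraMap A K (planarDet x y) = 0 := by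
  rw [toP1, toP1, Projectivization.mk_eq_mk_iff, map_planarDet,
    planarDet_eq_zero_iff_exists_unit_smul (hx.map _) (hy.map _)]

variable [IsDomain A] [IsFractionRing A K]

variable (A) in
theorem exists_toP1_eq [IsBezout A] (P : P1 K) :
    ∃ (x : Fin 2 → A) (hx : IsCoprime (x 0) (x 1)), toP1 K x hx = P := by
  induction P using Projectivization.ind with | h v hv => ?_
  obtain ⟨b, hb⟩ := IsLocalization.exist_integer_multiples_of_finite A⁰ v
  choose n hn using hb
  obtain ⟨g, x, hx, rfl⟩ := exists_eq_smul_isCoprime n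
  refine ⟨x, hx, ((Projectivization.mk_eq_mk_iff' K _ _ _ _).mpr
    ⟨algebraMap A K g / algebraMap A K b, ?_⟩).symm⟩
  ext i
  have hb₀ : algebraMap A K b ≠ 0 := IsFractionRing.to_map_ne_zero_of_mem_nonZeroDivisors b.2
  have hni := hn i
  simp only [Pi.smul_apply, smul_eq_mul, map_mul, Algebra.smul_def] at hni
  rw [Pi.smul_apply, smul_eq_mul, Function.comp_apply, div_mul_eq_mul_div, hni,
    mul_div_cancel_left₀ _ hb₀]

variable [ValuationRing A]

variable (A) in
/-- The reduction of a point of the projective line over the fraction field `K` of a valuation ring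
`A`, computed on chosen coprime coordinates in `A`. -/
noncomputable def reduction (P : P1 K) : P1 (IsLocalRing.ResidueField A) :=
  toP1 _ _ (exists_toP1_eq A P).choose_spec.choose

theorem reduction_toP1 {x : Fin 2 → A} (hx : IsCoprime (x 0) (x 1)) :
    reduction A (toP1 K x hx) = toP1 (IsLocalRing.ResidueField A) x hx := by
  have h := (exists_toP1_eq A (toP1 K x hx)).choose_spec.choose_spec
  rw [toP1_eq_toP1_iff, FaithfulSMul.algebraMap_eq_zero_iff] at h
  rw [reduction, toP1_eq_toP1_iff, h, map_zero]

theorem isUnit_planarDet_iff {x y : Fin 2 → A} (hx : IsCoprime (x 0) (x 1))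
    (hy : IsCoprime (y 0) (y 1)) :
    IsUnit (planarDet x y) ↔ reduction A (toP1 K x hx) ≠ reduction A (toP1 K y hy) := by
  rw [reduction_toP1, reduction_toP1, Ne, toP1_eq_toP1_iff]
  exact (IsLocalRing.residue_ne_zero_iff_isUnit _).symm

theorem exists_toP1_eq_of_reduction_eq {x : Fin 2 → A} (hx : IsCoprime (x 0) (x 1)) {Q : P1 K}
    (h : reduction A Q = reduction A (toP1 K x hx)) :
    ∃ (y : Fin 2 → A) (hy : IsCoprime (y 0) (y 1)), toP1 K y hy = Q ∧
      IsLocalRing.residue A ∘ y = IsLocalRing.residue A ∘ x := by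
  obtain ⟨z, hz, rfl⟩ := exists_toP1_eq A Q
  rw [reduction_toP1, reduction_toP1, eq_comm, toP1, toP1, Projectivization.mk_eq_mk_iff] at h
  obtain ⟨u, hu⟩ := h
  obtain ⟨u, rfl⟩ := IsLocalRing.surjective_units_map_of_local_ringHom (IsLocalRing.residue A)
    IsLocalRing.residue_surjective inferInstance u
  have huz : IsCoprime ((u • z) 0) ((u • z) 1) :=
    (isCoprime_mul_unit_left u.isUnit (z 0) (z 1)).mpr hz
  refine ⟨u • z, huz, ?_, ?_⟩
  · rw [toP1_eq_toP1_iff, (planarDet_eq_zero_iff_exists_unit_smul huz hz).mpr ⟨u, rfl⟩, map_zero]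
  · refine Eq.trans (funext fun i ↦ ?_) hu
    exact map_mul (IsLocalRing.residue A) (u : A) (z i)

end ProjectiveLine

section GoodModel

variable {A : Type*} [CommRing A] {K : Type*} [Field K] [Algebra A K] {f : P1 K → P1 K} {d : ℕ}
  {F : Fin 2 → MvPolynomial (Fin 2) A}

/-- The self-map `f` of the projective line over `K` is given by the pair `F` of binary forms of
degree `d` over `A`, which takes coprime values at coprime arguments. Over a valuation ring this
expresses good reduction of `f`; over `A = K` it only says that the forms define `f`. -/
structure IsGoodModel (f : P1 K → P1 K) (d : ℕ) (F : Fin 2 → MvPolynomial (Fin 2) A) : Prop where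
  isHomogeneous : ∀ i, (F i).IsHomogeneous d
  isCoprime_eval : ∀ x : Fin 2 → A, IsCoprime (x 0) (x 1) → IsCoprime (eval x (F 0)) (eval x (F 1))
  map_toP1 : ∀ (x : Fin 2 → A) (hx : IsCoprime (x 0) (x 1)),
    f (toP1 K x hx) = toP1 K (fun i ↦ eval x (F i)) (isCoprime_eval x hx)

theorem isCoprime_eval_of_forall_eq_zero [IsLocalRing A] {L : Type*} [Field L] (ρ : A →+* L)
    [IsLocalHom ρ] {F G : MvPolynomial (Fin 2) A} (h : ∀ x y : L, eval ![x, y] (map ρ F) = 0 →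
      eval ![x, y] (map ρ G) = 0 → x = 0 ∧ y = 0)
    {x : Fin 2 → A} (hx : IsCoprime (x 0) (x 1)) : IsCoprime (eval x F) (eval x G) := by
  by_contra hFG
  have hF : ¬ IsUnit (eval x F) := fun h ↦
    hFG (isCoprime_one_left.of_isCoprime_of_dvd_left (isUnit_iff_dvd_one.mp h))
  have hG : ¬ IsUnit (eval x G) := fun h ↦
    hFG (isCoprime_one_right.of_isCoprime_of_dvd_right (isUnit_iff_dvd_one.mp h))
  have hzero : ∀ H, ¬ IsUnit (eval x H) → eval ![ρ (x 0), ρ (x 1)] (map ρ H) = 0 := fun H hH ↦ by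
    have hx : ρ ∘ x = ![ρ (x 0), ρ (x 1)] := List.ofFn_inj.mp rfl
    rwa [← isUnit_map_iff ρ, isUnit_iff_ne_zero, not_not, ← eval_map_comp, hx] at hH
  obtain ⟨h₀, h₁⟩ := h _ _ (hzero _ hF) (hzero _ hG)
  exact (hx.map ρ).ne_zero (p := ![ρ (x 0), ρ (x 1)]) (by rw [h₀, h₁]; simp)

/-- The pair of binary forms defining an endomorphism of the projective line. -/
def P1Map.forms (φ : P1Map K d) : Fin 2 → MvPolynomial (Fin 2) K := ![φ.F, φ.G]

theorem P1Map.toFun_mk (φ : P1Map K d) {x : Fin 2 → K} (hx : x ≠ 0)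
    (h : (fun i ↦ eval x (φ.forms i)) ≠ 0) :
    φ.toFun (Projectivization.mk K x hx) =
      Projectivization.mk K (fun i ↦ eval x (φ.forms i)) h := by
  obtain ⟨a, b, rfl⟩ : ∃ a b, x = ![a, b] := ⟨x 0, x 1, List.ofFn_inj.mp rfl⟩
  have hforms : (fun i ↦ eval ![a, b] (φ.forms i)) = ![eval ![a, b] φ.F, eval ![a, b] φ.G] :=
    List.ofFn_inj.mp rfl
  simp only [hforms] at h ⊢
  exact φ.compat a b hx h

theorem isGoodModel_of_map_eq [FaithfulSMul A K] (φ : P1Map K d) {c : K}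
    (hFφ : ∀ i, map (algebraMap A K) (F i) = C c * φ.forms i)
    (hF : ∀ x : Fin 2 → A, IsCoprime (x 0) (x 1) → IsCoprime (eval x (F 0)) (eval x (F 1))) :
    IsGoodModel φ.toFun d F where
  isHomogeneous i := by
    refine .of_map (FaithfulSMul.algebraMap_injective A K) (hFφ i ▸ IsHomogeneous.C_mul ?_ c)
    exact (Fin.forall_fin_two (p := fun i ↦ (φ.forms i).IsHomogeneous d)).mpr ⟨φ.homF, φ.homG⟩ i
  isCoprime_eval := hF
  map_toP1 x hx := by
    have hval : algebraMap A K ∘ (fun i ↦ eval x (F i)) =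
        c • fun i ↦ eval (algebraMap A K ∘ x) (φ.forms i) := by
      ext i
      rw [Function.comp_apply, ← eval_map_comp, hFφ, map_mul, eval_C, Pi.smul_apply, smul_eq_mul]
    have hne : (fun i ↦ eval (algebraMap A K ∘ x) (φ.forms i)) ≠ 0 := fun h ↦
      ((hF x hx).map (algebraMap A K)).ne_zero (p := algebraMap A K ∘ fun i ↦ eval x (F i))
        (by rw [hval, h, smul_zero])
    exact (φ.toFun_mk _ hne).trans
      ((Projectivization.mk_eq_mk_iff' K _ _ _ _).mpr ⟨c, hval.symm⟩).symm

theorem P1Map.isGoodModel (φ : P1Map K d) : IsGoodModel φ.toFun d φ.forms := by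
  refine isGoodModel_of_map_eq (c := 1) φ (fun i ↦ ?_) fun x hx ↦
    isCoprime_eval_of_forall_eq_zero (algebraMap K (AlgebraicClosure K)) (fun y z h₀ h₁ ↦ ?_) hx
  · rw [Algebra.algebraMap_self, map_id, map_one, one_mul]
  · rw [eval_map, ← aeval_def] at h₀ h₁
    exact φ.coprime y z h₀ h₁

end GoodModel

theorem GoodReductionAt.exists_isGoodModel {K : Type*} [Field K] [NumberField K] {d : ℕ}
    {φ : P1Map K d} {v : HeightOneSpectrum (𝓞 K)} (h : GoodReductionAt φ v) :
    ∃ F : Fin 2 → MvPolynomial (Fin 2) (v.valuation K).valuationSubring,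
      IsGoodModel φ.toFun d F := by
  obtain ⟨c, -, F, G, hF, hG, -, hFG⟩ := h
  exact ⟨![F, G], isGoodModel_of_map_eq φ (Fin.forall_fin_two.mpr ⟨hF, hG⟩) fun x hx ↦
    isCoprime_eval_of_forall_eq_zero _ hFG hx⟩

section Fibres

variable {A : Type*} [CommRing A] {K : Type*} [Field K] [Algebra A K] {f : P1 K → P1 K} {d : ℕ}
  {F : Fin 2 → MvPolynomial (Fin 2) A}

/-- The binary form whose zeros are the preimages, under the map given by the forms `F`, of
the point of the projective line with coordinates `x`. -/
noncomputable def fibreForm (F : Fin 2 → MvPolynomial (Fin 2) A) (x : Fin 2 → A) :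
    MvPolynomial (Fin 2) A :=
  C (x 1) * F 0 - C (x 0) * F 1

theorem eval_fibreForm (F : Fin 2 → MvPolynomial (Fin 2) A) (x y : Fin 2 → A) :
    eval y (fibreForm F x) = planarDet (fun i ↦ eval y (F i)) x := by
  simp only [fibreForm, planarDet, map_sub, map_mul, eval_C]
  ring

namespace IsGoodModel

theorem isHomogeneous_fibreForm (h : IsGoodModel f d F) (x : Fin 2 → A) :
    (fibreForm F x).IsHomogeneous d :=
  ((h.isHomogeneous 0).C_mul _).sub ((h.isHomogeneous 1).C_mul _)

theorem map_toP1_eq_toP1_iff [FaithfulSMul A K] (h : IsGoodModel f d F) {x y : Fin 2 → A}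
    (hx : IsCoprime (x 0) (x 1)) (hy : IsCoprime (y 0) (y 1)) :
    f (toP1 K y hy) = toP1 K x hx ↔ eval y (fibreForm F x) = 0 := by
  rw [h.map_toP1, toP1_eq_toP1_iff, FaithfulSMul.algebraMap_eq_zero_iff, eval_fibreForm]

variable [IsDomain A] [ValuationRing A] [IsFractionRing A K]

theorem reduction_map_eq (h : IsGoodModel f d F) {P Q : P1 K}
    (hPQ : reduction A P = reduction A Q) : reduction A (f P) = reduction A (f Q) := by
  obtain ⟨x, hx, rfl⟩ := exists_toP1_eq A Q
  obtain ⟨y, hy, rfl, hyx⟩ := exists_toP1_eq_of_reduction_eq hx hPQ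
  rw [h.map_toP1, h.map_toP1, reduction_toP1, reduction_toP1]
  have heval : algebraMap A (IsLocalRing.ResidueField A) ∘ (fun i ↦ eval y (F i)) =
      algebraMap A (IsLocalRing.ResidueField A) ∘ fun i ↦ eval x (F i) := by
    ext i
    change IsLocalRing.residue A (eval y (F i)) = IsLocalRing.residue A (eval x (F i))
    rw [← eval_map_comp, hyx, eval_map_comp]
  simp only [toP1, heval]

theorem reduction_iterate_eq (h : IsGoodModel f d F) {P Q : P1 K}
    (hPQ : reduction A P = reduction A Q) (n : ℕ) :
    reduction A (f^[n] P) = reduction A (f^[n] Q) := by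
  induction n with
  | zero => exact hPQ
  | succ n ih =>
    rw [Function.iterate_succ_apply', Function.iterate_succ_apply']
    exact h.reduction_map_eq ih

-- The form whose zeros are the preimages of `P` is the product of the linear form that vanishes at
-- `P'` with a form `H`, which is a unit at `P` because `f P = P'`; hence no zero of `H` reduces to
-- the same point as `P`.
theorem reduction_ne_of_map_eq (h : IsGoodModel f d F) {P P' Q : P1 K} (hPP' : f P = P')
    (hP'P : f P' = P) (hne : P ≠ P') (hQP : f Q = P) (hQ : Q ≠ P') :
    reduction A Q ≠ reduction A P := by
  intro hred
  obtain ⟨x, hx, rfl⟩ := exists_toP1_eq A P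
  obtain ⟨p, hp, rfl⟩ := exists_toP1_eq A P'
  obtain ⟨y, hy, rfl, hyx⟩ := exists_toP1_eq_of_reduction_eq hx hred
  obtain ⟨H, hH⟩ := lineForm_dvd (h.isHomogeneous_fibreForm x) hp
    ((h.map_toP1_eq_toP1_iff hx hp).mp hP'P)
  have hHy : eval y H = 0 := by
    have := (h.map_toP1_eq_toP1_iff hx hy).mp hQP
    rw [hH, map_mul, eval_lineForm] at this
    refine (mul_eq_zero.mp this).resolve_left fun h₀ ↦ hQ ?_
    rw [toP1_eq_toP1_iff, h₀, map_zero]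
  have hHx : IsUnit (eval x H) := by
    rw [h.map_toP1, toP1_eq_toP1_iff, FaithfulSMul.algebraMap_eq_zero_iff,
      planarDet_eq_zero_iff_exists_unit_smul (h.isCoprime_eval x hx) hp] at hPP'
    obtain ⟨u, hu⟩ := hPP'
    have hval : planarDet x p * eval x H = - (u * planarDet x p) := by
      rw [← eval_lineForm, ← map_mul, ← hH, eval_fibreForm, ← hu, eval_lineForm]
      simp only [planarDet, Pi.smul_apply, Units.smul_def, smul_eq_mul]
      ring
    have hdet : planarDet x p ≠ 0 := fun h₀ ↦ hne (by rw [toP1_eq_toP1_iff, h₀, map_zero])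
    have hHu : eval x H = -u := mul_left_cancel₀ hdet (by rw [hval]; ring)
    exact hHu ▸ u.isUnit.neg
  have hunit := (isUnit_map_iff (IsLocalRing.residue A) (eval x H)).mpr hHx
  rw [← eval_map_comp, ← hyx, eval_map_comp, hHy, map_zero] at hunit
  exact not_isUnit_zero hunit

end IsGoodModel

end Fibres

section CountingFibres

theorem encard_preimage_le_mul {α β : Type*} {f : α → β} {k : ℕ∞}
    (hf : ∀ t, (f ⁻¹' {t}).encard ≤ k) {W : Set β} (hW : W.Finite) :
    (f ⁻¹' W).encard ≤ k * W.encard := by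
  lift W to Finset β using hW
  calc (f ⁻¹' W).encard = (⋃ t ∈ W, f ⁻¹' {t}).encard := by
        rw [← Finset.set_biUnion_preimage_singleton]
    _ ≤ ∑ t ∈ W, (f ⁻¹' {t}).encard := W.set_encard_biUnion_le _
    _ ≤ W.card • k := Finset.sum_le_card_nsmul _ _ _ fun t _ ↦ hf t
    _ = k * (W : Set β).encard := by
        rw [nsmul_eq_mul, mul_comm, Set.encard_coe_eq_coe_finsetCard]

variable {A : Type*} [CommRing A] [IsDomain A] {K : Type*} [Field K] [Algebra A K] {d : ℕ}

variable (K) in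
theorem encard_zeros_le [FaithfulSMul A K] {H : MvPolynomial (Fin 2) A} (hH : H.IsHomogeneous d)
    (hH₀ : H ≠ 0) :
    {P : P1 K | ∃ x hx, toP1 K x hx = P ∧ eval x H = 0}.encard ≤ d := by
  induction d generalizing H with
  | zero =>
    obtain ⟨a, rfl⟩ : ∃ a, H = C a := ⟨_, totalDegree_eq_zero_iff_eq_C.mp (hH.totalDegree hH₀)⟩
    refine (Set.encard_eq_zero.mpr (Set.eq_empty_of_forall_notMem ?_)).le
    rintro _ ⟨x, hx, -, hxH⟩
    exact hH₀ (by rw [← eval_C a (f := x), hxH, map_zero])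
  | succ n ih =>
    rcases Set.eq_empty_or_nonempty {P : P1 K | ∃ x hx, toP1 K x hx = P ∧ eval x H = 0} with
      hempty | ⟨P, p, hp, -, hpH⟩
    · rw [hempty, Set.encard_empty]
      exact zero_le
    obtain ⟨L, hL, rfl⟩ := exists_isHomogeneous_eq_mul_of_dvd (isHomogeneous_lineForm p)
      (add_comm n 1 ▸ hH) (lineForm_dvd hH hp hpH)
    refine (Set.encard_le_encard (t := insert (toP1 K p hp) _) ?_).trans
      ((Set.encard_insert_le _ _).trans (add_le_add_left (ih hL (right_ne_zero_of_mul hH₀)) 1))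
    rintro _ ⟨x, hx, rfl, hxH⟩
    rw [map_mul, mul_eq_zero, eval_lineForm] at hxH
    refine hxH.imp (fun h ↦ ?_) fun h ↦ ⟨x, hx, rfl, h⟩
    rw [toP1_eq_toP1_iff, h, map_zero]

theorem IsGoodModel.encard_preimage_singleton_le [IsBezout A] [IsFractionRing A K]
    {f : P1 K → P1 K} {F : Fin 2 → MvPolynomial (Fin 2) A} (h : IsGoodModel f d F) {Q t : P1 K}
    (hQ : f Q ≠ t) : (f ⁻¹' {t}).encard ≤ d := by
  obtain ⟨x, hx, rfl⟩ := exists_toP1_eq A t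
  obtain ⟨y, hy, rfl⟩ := exists_toP1_eq A Q
  have hne : fibreForm F x ≠ 0 := fun h₀ ↦
    hQ ((h.map_toP1_eq_toP1_iff hx hy).mpr (by rw [h₀, map_zero]))
  refine le_trans (Set.encard_le_encard fun P hP ↦ ?_)
    (encard_zeros_le K (h.isHomogeneous_fibreForm x) hne)
  obtain ⟨z, hz, rfl⟩ := exists_toP1_eq A P
  exact ⟨z, hz, rfl, (h.map_toP1_eq_toP1_iff hx hz).mp hP⟩

end CountingFibres

section TwoSets

variable {K : Type*} [Field K]

theorem encard_le_encard_coe_preimage_add_one {α : Type*} (s : Set (OnePoint α)) :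
    s.encard ≤ ((↑) ⁻¹' s : Set α).encard + 1 := by
  refine (Set.encard_le_encard (t := insert OnePoint.infty ((↑) '' ((↑) ⁻¹' s : Set α)))
    fun x hx ↦ ?_).trans ((Set.encard_insert_le _ _).trans_eq ?_)
  · induction x using OnePoint.rec with
    | infty => exact Set.mem_insert _ _
    | coe a => exact Set.mem_insert_of_mem _ (Set.mem_image_of_mem _ hx)
  · rw [OnePoint.coe_injective.encard_image]

theorem exists_isUnit_eq_sub_mul_of_reduction_ne {A : Type*} [CommRing A] [IsDomain A]
    [ValuationRing A] [Algebra A K] [IsFractionRing A K] :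
    ∃ w : K → K, ∀ a b : K, reduction A (OnePoint.equivProjectivization K a) ≠
      reduction A (OnePoint.equivProjectivization K b) →
        ∃ u : A, IsUnit u ∧ algebraMap A K u = (a - b) * (w a * w b) := by
  choose x hx hxa using fun a : K ↦ exists_toP1_eq A (OnePoint.equivProjectivization K a)
  have hcoord : ∀ a, algebraMap A K (x a 0) = algebraMap A K (x a 1) * a := fun a ↦ by
    obtain ⟨c, hc⟩ := (Projectivization.mk_eq_mk_iff' K _ _ _ _).mp (hxa a)
    have h₀ := congrFun hc 0
    have h₁ := congrFun hc 1
    simp only [Pi.smul_apply, smul_eq_mul, Matrix.cons_val_zero, Matrix.cons_val_one, mul_one,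
      Function.comp_apply] at h₀ h₁
    rw [← h₀, ← h₁]
  refine ⟨fun a ↦ algebraMap A K (x a 1), fun a b hab ↦ ⟨planarDet (x a) (x b), ?_, ?_⟩⟩
  · rwa [isUnit_planarDet_iff (hx a) (hx b) (K := K), hxa, hxa]
  · rw [map_planarDet, planarDet, Function.comp_apply, Function.comp_apply, Function.comp_apply,
      Function.comp_apply, hcoord, hcoord]
    ring

variable [NumberField K]

theorem finitePlace_mk_eq_one_of_isUnit (v : HeightOneSpectrum (𝓞 K))
    {u : (v.valuation K).valuationSubring} (hu : IsUnit u) : FinitePlace.mk v (u : K) = 1 := by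
  have h : v.valuation K u = 1 :=
    ((Valuation.integer.integers (v.valuation K)).isUnit_iff_valuation_eq_one (x := u)).mp hu
  rw [FinitePlace.mk_apply, FinitePlace.norm_embedding, HeightOneSpectrum.adicAbv_def, h, map_one,
    NNReal.coe_one]

theorem finitePlace_cross_eq_of_reduction_ne (v : HeightOneSpectrum (𝓞 K)) {A B : Set K}
    (h : ∀ a ∈ A, ∀ b ∈ B,
      reduction (v.valuation K).valuationSubring (OnePoint.equivProjectivization K a) ≠
        reduction (v.valuation K).valuationSubring (OnePoint.equivProjectivization K b))
    {a a' b b' : K} (ha : a ∈ A) (ha' : a' ∈ A) (hb : b ∈ B) (hb' : b' ∈ B) :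
    FinitePlace.mk v ((a - b) * (a' - b')) = FinitePlace.mk v ((a - b') * (a' - b)) := by
  obtain ⟨w, hw⟩ := exists_isUnit_eq_sub_mul_of_reduction_ne (K := K)
    (A := (v.valuation K).valuationSubring)
  have hv : ∀ a ∈ A, ∀ b ∈ B,
      FinitePlace.mk v (a - b) = (FinitePlace.mk v (w a) * FinitePlace.mk v (w b))⁻¹ := by
    intro a ha b hb
    obtain ⟨u, hu, hab⟩ := hw a b (h a ha b hb)
    refine eq_inv_of_mul_eq_one_left ?_
    rw [← map_mul, ← map_mul, ← hab]
    exact finitePlace_mk_eq_one_of_isUnit v hu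
  rw [map_mul, map_mul, hv a ha b hb, hv a' ha' b' hb', hv a ha b' hb', hv a' ha' b hb]
  simp only [mul_inv]
  ring

theorem encard_le_or_encard_le_of_reduction_ne {T : Finset (HeightOneSpectrum (𝓞 K))}
    {X Y : Set (P1 K)} (hXY : Disjoint X Y)
    (h : ∀ v ∉ T, ∀ x ∈ X, ∀ y ∈ Y, reduction (v.valuation K).valuationSubring x ≠
      reduction (v.valuation K).valuationSubring y) :
    X.encard ≤ placesLoss T + 1 ∨ Y.encard ≤ placesLoss T + 1 := by
  let e := OnePoint.equivProjectivization K
  have hle : ∀ Z : Set (P1 K), Z.encard ≤ {a : K | e a ∈ Z}.encard + 1 := fun Z ↦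
    (Set.encard_preimage_of_bijective e.bijective Z).symm.trans_le
      (encard_le_encard_coe_preimage_add_one _)
  suffices {a : K | e a ∈ X}.encard ≤ placesLoss T ∨ {a : K | e a ∈ Y}.encard ≤ placesLoss T from
    this.imp (fun hX ↦ (hle X).trans (by gcongr)) fun hY ↦ (hle Y).trans (by gcongr)
  by_contra! hcon
  obtain ⟨A, hAX, hA⟩ := Set.exists_subset_encard_eq (Order.add_one_le_of_lt hcon.1)
  obtain ⟨B, hBY, hB⟩ := Set.exists_subset_encard_eq (Order.add_one_le_of_lt hcon.2)
  lift A to Finset K using Set.finite_of_encard_eq_coe (by exact_mod_cast hA)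
  lift B to Finset K using Set.finite_of_encard_eq_coe (by exact_mod_cast hB)
  have hAB : Disjoint A B := Finset.disjoint_left.mpr fun a ha hb ↦
    Set.disjoint_left.mp hXY (hAX ha) (hBY hb)
  have hcross := card_le_or_card_le_of_finitePlace_eq hAB fun v hv a ha a' ha' b hb b' hb' ↦
    finitePlace_cross_eq_of_reduction_ne v
      (fun a ha b hb ↦ h v hv (e a) (hAX ha) (e b) (hBY hb)) ha ha' hb hb'
  rw [Set.encard_coe_eq_coe_finsetCard] at hA hB
  norm_cast at hA hB
  lia

end TwoSets

section EntryLevels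

variable {α : Type*} {f : α → α} {C : Set α} {e Q : α} {m n : ℕ}

/-- The points that enter the set `C` under iteration of `f` after exactly `n` steps, at the
point `e`. -/
def entryLevel (f : α → α) (C : Set α) (e : α) (n : ℕ) : Set α :=
  {Q | f^[n] Q = e ∧ ∀ m < n, f^[m] Q ∉ C}

theorem map_mem_entryLevel (hQ : Q ∈ entryLevel f C e (n + 1)) : f Q ∈ entryLevel f C e n :=
  ⟨hQ.1, fun m hm ↦ hQ.2 (m + 1) (Nat.succ_lt_succ hm)⟩

theorem eq_of_mem_entryLevel (he : e ∈ C) (hm : Q ∈ entryLevel f C e m)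
    (hn : Q ∈ entryLevel f C e n) : m = n :=
  le_antisymm (not_lt.mp fun h ↦ hm.2 n h (hn.1.symm ▸ he))
    (not_lt.mp fun h ↦ hn.2 m h (hm.1.symm ▸ he))

theorem exists_mem_entryLevel (hQC : Q ∉ C) (h : ∃ n, f^[n] Q ∈ C) :
    ∃ e ∈ C, ∃ n, Q ∈ entryLevel f C e (n + 1) := by
  obtain ⟨n, hn⟩ : ∃ n, Nat.find h = n + 1 :=
    Nat.exists_eq_add_one.mpr ((Nat.find_pos h).mpr hQC)
  exact ⟨f^[n + 1] Q, hn ▸ Nat.find_spec h, n, rfl, fun m hm ↦ Nat.find_min h (hn ▸ hm)⟩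

theorem encard_union_le_of_subset_preimage {X Y : Set α} {k N : ℕ∞}
    (hf : ∀ t, (f ⁻¹' {t}).encard ≤ k) (hN : N ≠ ⊤) (hXY : X ⊆ f ⁻¹' Y)
    (hYX : Y ⊆ f ⁻¹' insert e X) (h : X.encard ≤ N ∨ Y.encard ≤ N) :
    (X ∪ Y).encard ≤ (k + 1) * (N + 1) := by
  have hfin : ∀ {Z : Set α}, Z.encard ≤ N → Z.Finite := fun hZ ↦
    Set.encard_ne_top_iff.mp (ne_top_of_le_ne_top hN hZ)
  rcases h with hX | hY
  · have hY : Y.encard ≤ k * (N + 1) := calc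
      Y.encard ≤ (f ⁻¹' insert e X).encard := Set.encard_le_encard hYX
      _ ≤ k * (insert e X).encard := encard_preimage_le_mul hf ((hfin hX).insert e)
      _ ≤ k * (N + 1) := by gcongr; exact (Set.encard_insert_le X e).trans (by gcongr)
    calc (X ∪ Y).encard ≤ X.encard + Y.encard := Set.encard_union_le X Y
      _ ≤ (N + 1) + k * (N + 1) := add_le_add (hX.trans le_self_add) hY
      _ = (k + 1) * (N + 1) := by ring
  · have hX : X.encard ≤ k * N := calc
      X.encard ≤ (f ⁻¹' Y).encard := Set.encard_le_encard hXY
      _ ≤ k * Y.encard := encard_preimage_le_mul hf (hfin hY)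
      _ ≤ k * N := by gcongr
    calc (X ∪ Y).encard ≤ X.encard + Y.encard := Set.encard_union_le X Y
      _ ≤ k * N + N := add_le_add hX hY
      _ = (k + 1) * N := by ring
      _ ≤ (k + 1) * (N + 1) := by gcongr; exact le_self_add

end EntryLevels

section TwoCycle

-- Iterating brings both points next to the cycle, where one equals `P` and the other maps to `P`.
theorem IsGoodModel.reduction_ne_of_mem_entryLevel {A : Type*} [CommRing A] [IsDomain A]
    [ValuationRing A] {K : Type*} [Field K] [Algebra A K] [IsFractionRing A K]
    {f : P1 K → P1 K} {d : ℕ} {F : Fin 2 → MvPolynomial (Fin 2) A} (h : IsGoodModel f d F)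
    {C : Set (P1 K)} {P P' x y : P1 K} (hPP' : f P = P') (hP'P : f P' = P) (hne : P ≠ P')
    (hP' : P' ∈ C) {m n : ℕ} (hmn : m < n) (hodd : Odd (m + n)) (hx : x ∈ entryLevel f C P m)
    (hy : y ∈ entryLevel f C P n) : reduction A y ≠ reduction A x := by
  obtain ⟨k, rfl⟩ : ∃ k, n = (k * 2 + m) + 1 := by
    obtain ⟨j, hj⟩ := hodd
    exact ⟨j - m, by lia⟩
  intro hxy
  have hper : (f^[2])^[k] P = P := Function.iterate_fixed (by simp [hPP', hP'P]) k
  have hxP : f^[k * 2 + m] x = P := by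
    rw [Function.iterate_add_apply, hx.1, mul_comm, Function.iterate_mul, hper]
  refine h.reduction_ne_of_map_eq hPP' hP'P hne (Q := f^[k * 2 + m] y) ?_ ?_
    (hxP ▸ h.reduction_iterate_eq hxy _)
  · rw [← Function.iterate_succ_apply' f]
    exact hy.1
  · exact fun h ↦ hy.2 _ (Nat.lt_succ_self _) (h ▸ hP')

variable {K : Type*} [Field K] {d : ℕ} {φ : P1Map K d}

theorem encard_preimage_singleton_le_of_two_cycle {P P' : P1 K} (hPP' : φ.toFun P = P')
    (hP'P : φ.toFun P' = P) (hne : P ≠ P') (t : P1 K) : (φ.toFun ⁻¹' {t}).encard ≤ d := by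
  by_cases ht : t = P
  · exact φ.isGoodModel.encard_preimage_singleton_le (Q := P) (by rw [hPP', ht]; exact hne.symm)
  · exact φ.isGoodModel.encard_preimage_singleton_le (Q := P') (by rw [hP'P]; exact Ne.symm ht)

theorem tailOf_subset_iUnion_entryLevel {P P' : P1 K} (hPP' : φ.toFun P = P')
    (hP'P : φ.toFun P' = P) :
    TailOf φ P ⊆ (⋃ n, entryLevel φ.toFun {P, P'} P (n + 1)) ∪
      ⋃ n, entryLevel φ.toFun {P, P'} P' (n + 1) := by
  rintro Q ⟨hQ, n, hn⟩
  have hQC : Q ∉ ({P, P'} : Set (P1 K)) := by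
    rintro (rfl | rfl)
    exacts [hQ ⟨2, two_pos, by simp [hPP', hP'P]⟩, hQ ⟨2, two_pos, by simp [hPP', hP'P]⟩]
  obtain ⟨e, rfl | rfl, hlevel⟩ := exists_mem_entryLevel hQC ⟨n, Or.inl hn⟩
  exacts [Or.inl (Set.mem_iUnion.mpr hlevel), Or.inr (Set.mem_iUnion.mpr hlevel)]

variable [NumberField K] {T : Finset (HeightOneSpectrum (𝓞 K))}

theorem encard_iUnion_entryLevel_le (hgr : GoodReductionOutside φ T) {C : Set (P1 K)}
    {P P' : P1 K} (hP : P ∈ C) (hP' : P' ∈ C) (hPP' : φ.toFun P = P') (hP'P : φ.toFun P' = P)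
    (hne : P ≠ P') :
    (⋃ n, entryLevel φ.toFun C P (n + 1)).encard ≤ (d + 1) * (placesLoss T + 1 + 1) := by
  let X : Set (P1 K) := ⋃ n, entryLevel φ.toFun C P (2 * n + 1 + 1)
  let Y : Set (P1 K) := ⋃ n, entryLevel φ.toFun C P (2 * n + 1)
  have hcover : (⋃ n, entryLevel φ.toFun C P (n + 1)) ⊆ X ∪ Y := Set.iUnion_subset fun n ↦ by
    obtain ⟨k, rfl | rfl⟩ := n.even_or_odd'
    · exact Set.subset_union_of_subset_right
        (Set.subset_iUnion (fun k ↦ entryLevel φ.toFun C P (2 * k + 1)) k) X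
    · exact Set.subset_union_of_subset_left
        (Set.subset_iUnion (fun k ↦ entryLevel φ.toFun C P (2 * k + 1 + 1)) k) Y
  have hXY : X ⊆ φ.toFun ⁻¹' Y := Set.iUnion_subset fun n Q hQ ↦
    Set.mem_iUnion_of_mem n (map_mem_entryLevel hQ)
  have hYX : Y ⊆ φ.toFun ⁻¹' insert P X := Set.iUnion_subset fun n Q hQ ↦ by
    rcases n with - | n
    · exact Or.inl hQ.1
    · exact Or.inr (Set.mem_iUnion_of_mem n (map_mem_entryLevel hQ))
  have hdisj : Disjoint X Y := by
    rw [Set.disjoint_left]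
    intro Q hX hY
    obtain ⟨m, hm⟩ := Set.mem_iUnion.mp hX
    obtain ⟨n, hn⟩ := Set.mem_iUnion.mp hY
    have := eq_of_mem_entryLevel hP hm hn
    lia
  refine (Set.encard_le_encard hcover).trans (encard_union_le_of_subset_preimage
    (encard_preimage_singleton_le_of_two_cycle hPP' hP'P hne) (by simp) hXY hYX
    (encard_le_or_encard_le_of_reduction_ne hdisj fun v hv x hx y hy ↦ ?_))
  obtain ⟨F, hF⟩ := (hgr v hv).exists_isGoodModel
  obtain ⟨m, hm⟩ := Set.mem_iUnion.mp hx
  obtain ⟨n, hn⟩ := Set.mem_iUnion.mp hy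
  have hodd : Odd (2 * m + 1 + 1 + (2 * n + 1)) := ⟨m + n + 1, by ring⟩
  rcases lt_or_gt_of_ne (show 2 * m + 1 + 1 ≠ 2 * n + 1 by lia) with h | h
  · exact (hF.reduction_ne_of_mem_entryLevel hPP' hP'P hne hP' h hodd hm hn).symm
  · exact hF.reduction_ne_of_mem_entryLevel hPP' hP'P hne hP' h
      (add_comm (2 * n + 1) _ ▸ hodd) hn hm

end TwoCycle

section Constant

variable {K : Type*} [Field K] [NumberField K] (T : Finset (HeightOneSpectrum (𝓞 K)))

theorem one_le_placesLoss : 1 ≤ placesLoss T :=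
  Nat.succ_le_of_lt (by unfold placesLoss archLoss; positivity)

theorem six_mul_placesLoss_le_Cconst_three : (6 * placesLoss T : ℝ) ≤ Cconst 3 (sCard K T) := by
  set s := sCard K T with hs
  have hs₁ : 1 ≤ s := Nat.le_add_left_of_le Fintype.card_pos
  have harch : archLoss ℂ = 390626 := by
    norm_num [archLoss, Complex.finrank_real_complex]
  have hloss : placesLoss T ≤ 390626 ^ s := by
    rw [placesLoss, harch, hs, sCard, pow_add]
    gcongr
    norm_num
  calc (6 * placesLoss T : ℝ) ≤ 6 ^ s * 390626 ^ s := by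
        gcongr
        · exact le_self_pow₀ (by norm_num) (by lia)
        · exact_mod_cast hloss
    _ = (6 * 390626) ^ s := (mul_pow _ _ _).symm
    _ ≤ Real.exp (18 ^ 9) ^ s := by
        gcongr
        exact le_trans (by norm_num) (Real.add_one_le_exp _)
    _ = Real.exp (18 ^ 9 * s) := by rw [mul_comm, Real.exp_nat_mul]
    _ ≤ Real.exp (18 ^ 9 * (3 * s - 2)) := by
        have : (1 : ℝ) ≤ s := by exact_mod_cast hs₁
        gcongr
        linarith
    _ = Cconst 3 s := by
        rw [Cconst]
        push_cast
        ring_nf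

theorem two_mul_le_L2const {d : ℕ} (hd : 2 ≤ d) :
    (2 * ((d + 1) * (placesLoss T + 1 + 1)) : ℝ) ≤ L2const d (sCard K T) := by
  have hd' : (2 : ℝ) ≤ d := by exact_mod_cast hd
  have hN : (1 : ℝ) ≤ placesLoss T := by exact_mod_cast one_le_placesLoss T
  calc (2 * ((d + 1) * (placesLoss T + 1 + 1)) : ℝ)
      ≤ 2 * (2 * d * (3 * placesLoss T)) := by gcongr <;> linarith
    _ = 2 * (6 * placesLoss T) * d := by ring
    _ ≤ 2 * Cconst 3 (sCard K T) * d := by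
        gcongr
        exact six_mul_placesLoss_le_Cconst_three T
    _ ≤ (2 * (Cconst 3 (sCard K T) + 2) + 1) * d + 1 := by nlinarith
    _ ≤ L2const d (sCard K T) := le_max_left _ _

end Constant

/-- **Lemma (tail of a point of period two).** If `P ∈ ℙ¹(K)` is a periodic point of `φ` of
period `2`, then `|Tail(φ,K,P)| ≤ L₂(d,|S|)`. -/
theorem tailOf_period_two_bound
    {K : Type*} [Field K] [NumberField K]
    (T : Finset (HeightOneSpectrum (𝓞 K))) {d : ℕ} (hd : 2 ≤ d)
    (φ : P1Map K d) (hgr : GoodReductionOutside φ T)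
    (P : P1 K) (hP : Function.minimalPeriod φ.toFun P = 2) :
    (TailOf φ P).Finite ∧ ((TailOf φ P).ncard : ℝ) ≤ L2const d (sCard K T) := by
  set P' := φ.toFun P with hPP'
  have hP'P : φ.toFun P' = P := by
    have := Function.iterate_minimalPeriod (f := φ.toFun) (x := P)
    rwa [hP] at this
  have hne : P ≠ P' := fun h ↦ by
    have := Function.minimalPeriod_eq_one_iff_isFixedPt.mpr h.symm
    lia
  have hcard : (TailOf φ P).encard ≤ (2 * ((d + 1) * (placesLoss T + 1 + 1)) : ℕ) := calc
    (TailOf φ P).encard ≤ _ := Set.encard_le_encard (tailOf_subset_iUnion_entryLevel hPP'.symm hP'P)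
    _ ≤ _ := Set.encard_union_le _ _
    _ ≤ (d + 1) * (placesLoss T + 1 + 1) + (d + 1) * (placesLoss T + 1 + 1) := by
      gcongr
      · exact encard_iUnion_entryLevel_le hgr (by simp) (by simp) hPP'.symm hP'P hne
      · exact encard_iUnion_entryLevel_le hgr (by simp) (by simp) hP'P hPP'.symm hne.symm
    _ = _ := by push_cast; ring
  obtain ⟨hfin, hncard⟩ := Set.encard_le_coe_iff_finite_ncard_le.mp hcard
  exact ⟨hfin, (Nat.cast_le.mpr hncard).trans (by exact_mod_cast two_mul_le_L2const T hd)⟩
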